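/- Let $S$ be a set and let $\mathcal L$ be any family of subsets of $S$ (for example, the family of lines of a partial linear space). For an integer $k \ge 0$ let $\mathfrak y_k(S)$ be the set of multisets of size $k$ with elements in $S$; for multisets $e, f$ and an integer $r \ge 0$, $e + f$ is the multiset sum, $r\cdot f$ multiplies all multiplicities of $f$ by $r$, and for $x \in S$, $e + r\cdot x$ is $e$ with $r$ additional copies of $x$. The Veronese space $V_k(S,\mathcal L)$ has point set $\mathfrak y_k(S)$, and its blocks are the sets $\{e + r\cdot x : x \in B\}$ with $0 < r \le k$, $e \in \mathfrak y_{k-r}(S)$, $B \in \mathcal L$. Two points are adjacent if some block contains both of them. Let $k \ge 0$, $k' \ge 0$, $r \ge 1$ be integers and fix $e \in \mathfrak y_{k'}(S)$. Then: (1) the map $\mu_r : \mathfrak y_k(S) \to \mathfrak y_{rk}(S)$, $f \mapsto r\cdot f$, is well defined and injective, maps every block of $V_k(S,\mathcal L)$ onto a block of $V_{rk}(S,\mathcal L)$, and two points $f, g \in \mathfrak y_k(S)$ are adjacent in $V_k(S,\mathcal L)$ if and only if $\mu_r(f), \mu_r(g)$ are adjacent in $V_{rk}(S,\mathcal L)$;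 (2) the map $\tau_e : \mathfrak y_k(S) \to \mathfrak y_{k+k'}(S)$, $f \mapsto e + f$, is well defined and injective, maps every block of $V_k(S,\mathcal L)$ onto a block of $V_{k+k'}(S,\mathcal L)$, and two distinct points $f \ne g$ of $\mathfrak y_k(S)$ are adjacent in $V_k(S,\mathcal L)$ if and only if $\tau_e(f), \tau_e(g)$ are adjacent in $V_{k+k'}(S,\mathcal L)$; (3) the map $x \mapsto 1\cdot x$ is an isomorphism of $(S,\mathcal L)$ onto $V_1(S,\mathcal L)$: it is a bijection of $S$ onto $\mathfrak y_1(S)$, and the blocks of $V_1(S,\mathcal L)$ are exactly the images of the members of $\mathcal L$. -/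

import Mathlib

/-- The set of multisets of size `k` with elements in `S`. -/
def veroPoints (S : Type*) (k : ℕ) : Set (Multiset S) :=
  { m | Multiset.card m = k }

/-- The set `e + rB`, that is, `{e + r·x : x ∈ B}`. -/
def veroBlock {S : Type*} (e : Multiset S) (r : ℕ) (B : Set S) : Set (Multiset S) :=
  { m | ∃ x ∈ B, m = e + Multiset.replicate r x }

/-- The blocks of the `k`-th Veronese space over `(S, ℒ)`. -/
def veroBlocks {S : Type*} (k : ℕ) (ℒ : Set (Set S)) : Set (Set (Multiset S)) :=
  { C | ∃ (r : ℕ) (e : Multiset S) (B : Set S),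
      0 < r ∧ r ≤ k ∧ e ∈ veroPoints S (k - r) ∧ B ∈ ℒ ∧ C = veroBlock e r B }

/-- Two points are adjacent if some block contains both of them. -/
def BlockAdj {P : Type*} (blocks : Set (Set P)) (a b : P) : Prop :=
  ∃ C ∈ blocks, a ∈ C ∧ b ∈ C

/-- Multiplication of multisets by a positive natural number is injective. -/
theorem Multiset.nsmul_injective_of_pos {S : Type*} {r : ℕ} (hr : 0 < r) :
    Function.Injective (fun f : Multiset S => r • f) := by
  classical
  intro f g h
  ext x
  have hx := congrArg (Multiset.count x) h
  simp only [Multiset.count_nsmul] at hx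
  exact Nat.eq_of_mul_eq_mul_left hr hx

/-- If two multisets agree after adding `t` copies of distinct points, they arise from a common
multiset by adding `t` copies of these points. -/
theorem Multiset.exists_eq_add_replicate_of_add_replicate_eq {S : Type*} {f g : Multiset S}
    {x y : S} {t : ℕ} (hxy : x ≠ y)
    (h : f + Multiset.replicate t y = g + Multiset.replicate t x) :
    ∃ c, f = c + Multiset.replicate t x ∧ g = c + Multiset.replicate t y := by
  classical
  have hle : Multiset.replicate t x ≤ f := by
    rw [← Multiset.le_count_iff_replicate_le]
    have hx := congrArg (Multiset.count x) h
    simp only [Multiset.count_add, Multiset.count_replicate, if_neg hxy.symm, if_true] at hx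
    omega
  obtain ⟨c, rfl⟩ := Multiset.le_iff_exists_add.mp hle
  refine ⟨c, add_comm _ _, ?_⟩
  rw [add_assoc, add_comm] at h
  exact (add_right_cancel h).symm

theorem image_nsmul_veroBlock {S : Type*} (r : ℕ) (e : Multiset S) (s : ℕ) (B : Set S) :
    (fun f : Multiset S => r • f) '' veroBlock e s B = veroBlock (r • e) (r * s) B := by
  ext m
  constructor
  · rintro ⟨_, ⟨x, hx, rfl⟩, rfl⟩
    exact ⟨x, hx, by simp only [nsmul_add, Multiset.nsmul_replicate]⟩
  · rintro ⟨x, hx, rfl⟩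
    exact ⟨_, ⟨x, hx, rfl⟩, by simp only [nsmul_add, Multiset.nsmul_replicate]⟩

theorem image_add_veroBlock {S : Type*} (d e : Multiset S) (s : ℕ) (B : Set S) :
    (fun f : Multiset S => d + f) '' veroBlock e s B = veroBlock (d + e) s B := by
  ext m
  constructor
  · rintro ⟨_, ⟨x, hx, rfl⟩, rfl⟩
    exact ⟨x, hx, (add_assoc _ _ _).symm⟩
  · rintro ⟨x, hx, rfl⟩
    exact ⟨_, ⟨x, hx, rfl⟩, (add_assoc _ _ _).symm⟩

theorem image_nsmul_mem_veroBlocks {S : Type*} {ℒ : Set (Set S)} {k r : ℕ} (hr : 0 < r)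
    {C : Set (Multiset S)} (hC : C ∈ veroBlocks k ℒ) :
    (fun f : Multiset S => r • f) '' C ∈ veroBlocks (r * k) ℒ := by
  obtain ⟨s, e, B, hs, hsk, he, hB, rfl⟩ := hC
  refine ⟨r * s, r • e, B, Nat.mul_pos hr hs, Nat.mul_le_mul_left r hsk, ?_, hB,
    image_nsmul_veroBlock r e s B⟩
  have he' : Multiset.card e = k - s := he
  change Multiset.card (r • e) = _
  rw [Multiset.card_nsmul, he', Nat.mul_sub]

theorem image_add_mem_veroBlocks {S : Type*} {ℒ : Set (Set S)} {k k' : ℕ} {d : Multiset S}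
    (hd : d ∈ veroPoints S k') {C : Set (Multiset S)} (hC : C ∈ veroBlocks k ℒ) :
    (fun f : Multiset S => d + f) '' C ∈ veroBlocks (k + k') ℒ := by
  obtain ⟨s, e, B, hs, hsk, he, hB, rfl⟩ := hC
  refine ⟨s, d + e, B, hs, by omega, ?_, hB, image_add_veroBlock d e s B⟩
  have he' : Multiset.card e = k - s := he
  have hd' : Multiset.card d = k' := hd
  change Multiset.card (d + e) = _
  rw [Multiset.card_add, he', hd']
  omega

theorem BlockAdj.image {P Q : Type*} {𝒞 : Set (Set P)} {𝒟 : Set (Set Q)} {φ : P → Q}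
    (hφ : ∀ C ∈ 𝒞, φ '' C ∈ 𝒟) {a b : P} (h : BlockAdj 𝒞 a b) : BlockAdj 𝒟 (φ a) (φ b) := by
  obtain ⟨C, hC, ha, hb⟩ := h
  exact ⟨φ '' C, hφ C hC, Set.mem_image_of_mem φ ha, Set.mem_image_of_mem φ hb⟩

theorem BlockAdj.exists_eq_add_replicate {S : Type*} {ℒ : Set (Set S)} {k : ℕ}
    {f g : Multiset S} (h : BlockAdj (veroBlocks k ℒ) f g) :
    ∃ (t : ℕ) (c : Multiset S) (B : Set S) (x y : S), 0 < t ∧ B ∈ ℒ ∧ x ∈ B ∧ y ∈ B ∧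
      f = c + Multiset.replicate t x ∧ g = c + Multiset.replicate t y := by
  obtain ⟨_, ⟨t, c, B, ht, -, -, hB, rfl⟩, ⟨x, hx, hf⟩, ⟨y, hy, hg⟩⟩ := h
  exact ⟨t, c, B, x, y, ht, hB, hx, hy, hf, hg⟩

theorem blockAdj_add_replicate {S : Type*} {ℒ : Set (Set S)} {k t : ℕ} {c : Multiset S}
    {B : Set S} {x y : S} (ht : 0 < t) (hB : B ∈ ℒ) (hx : x ∈ B) (hy : y ∈ B)
    (hc : c + Multiset.replicate t x ∈ veroPoints S k) :
    BlockAdj (veroBlocks k ℒ) (c + Multiset.replicate t x) (c + Multiset.replicate t y) := by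
  have hk : Multiset.card (c + Multiset.replicate t x) = k := hc
  rw [Multiset.card_add, Multiset.card_replicate] at hk
  have hck : Multiset.card c = k - t := by omega
  exact ⟨_, ⟨t, c, B, ht, by omega, hck, hB, rfl⟩, ⟨x, hx, rfl⟩, ⟨y, hy, rfl⟩⟩

theorem blockAdj_of_nsmul {S : Type*} {ℒ : Set (Set S)} {k n r : ℕ} (hr : 0 < r)
    {f g : Multiset S} (hf : f ∈ veroPoints S k)
    (h : BlockAdj (veroBlocks n ℒ) (r • f) (r • g)) : BlockAdj (veroBlocks k ℒ) f g := by
  classical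
  obtain ⟨s, c, B, x, y, hs, hB, hx, hy, hfc, hgc⟩ := h.exists_eq_add_replicate
  by_cases hxy : x = y
  · subst hxy
    obtain rfl : f = g := Multiset.nsmul_injective_of_pos hr (hfc.trans hgc.symm)
    have hxf : x ∈ f := by
      refine Multiset.mem_of_mem_nsmul (n := r) ?_
      rw [hfc]
      exact Multiset.mem_add.mpr (.inr (Multiset.mem_replicate.mpr ⟨hs.ne', rfl⟩))
    obtain ⟨c', rfl⟩ := Multiset.exists_cons_of_mem hxf
    have hc' : x ::ₘ c' = c' + Multiset.replicate 1 x := by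
      rw [Multiset.replicate_one, add_comm, Multiset.singleton_add]
    rw [hc'] at hf ⊢
    exact blockAdj_add_replicate one_pos hB hx hx hf
  · have hfg : r • f + Multiset.replicate s y = r • g + Multiset.replicate s x := by
      rw [hfc, hgc, add_right_comm]
    obtain ⟨t, rfl⟩ : r ∣ s := by
      have hcount := congrArg (Multiset.count x) hfg
      simp only [Multiset.count_add, Multiset.count_nsmul, Multiset.count_replicate,
        if_neg (Ne.symm hxy), if_true, add_zero] at hcount
      exact (Nat.dvd_add_right (Nat.dvd_mul_right r _)).mp (hcount ▸ Nat.dvd_mul_right r _)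
    have hfg' : f + Multiset.replicate t y = g + Multiset.replicate t x := by
      apply Multiset.nsmul_injective_of_pos hr
      simpa only [nsmul_add, Multiset.nsmul_replicate] using hfg
    obtain ⟨c', rfl, rfl⟩ := Multiset.exists_eq_add_replicate_of_add_replicate_eq hxy hfg'
    exact blockAdj_add_replicate (Nat.pos_of_mul_pos_left hs) hB hx hy hf

theorem blockAdj_of_add {S : Type*} {ℒ : Set (Set S)} {k n : ℕ} {e f g : Multiset S}
    (hf : f ∈ veroPoints S k) (hfg : f ≠ g)
    (h : BlockAdj (veroBlocks n ℒ) (e + f) (e + g)) : BlockAdj (veroBlocks k ℒ) f g := by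
  obtain ⟨s, c, B, x, y, hs, hB, hx, hy, hfc, hgc⟩ := h.exists_eq_add_replicate
  have hxy : x ≠ y := by
    rintro rfl
    exact hfg (add_left_cancel (hfc.trans hgc.symm))
  have hfg' : f + Multiset.replicate s y = g + Multiset.replicate s x := by
    apply add_left_cancel (a := e)
    rw [← add_assoc, ← add_assoc, hfc, hgc, add_right_comm]
  obtain ⟨c', rfl, rfl⟩ := Multiset.exists_eq_add_replicate_of_add_replicate_eq hxy hfg'
  exact blockAdj_add_replicate hs hB hx hy hf

theorem bijOn_singleton_veroPoints_one (S : Type*) :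
    Set.BijOn (fun x : S => ({x} : Multiset S)) Set.univ (veroPoints S 1) := by
  refine ⟨fun x _ => Multiset.card_singleton x, fun x _ y _ h => Multiset.singleton_inj.mp h, ?_⟩
  intro m hm
  obtain ⟨x, rfl⟩ := Multiset.card_eq_one.mp hm
  exact ⟨x, Set.mem_univ x, rfl⟩

theorem veroBlock_zero_one {S : Type*} (B : Set S) :
    veroBlock 0 1 B = (fun x : S => ({x} : Multiset S)) '' B := by
  ext m
  simp only [veroBlock, zero_add, Multiset.replicate_one, Set.mem_ofPred_eq, Set.mem_image, eq_comm]

theorem mem_veroBlocks_one {S : Type*} {ℒ : Set (Set S)} {C : Set (Multiset S)} :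
    C ∈ veroBlocks 1 ℒ ↔ ∃ B ∈ ℒ, (fun x : S => ({x} : Multiset S)) '' B = C := by
  constructor
  · rintro ⟨r, e, B, hr, hr1, he, hB, rfl⟩
    obtain rfl : r = 1 := le_antisymm hr1 hr
    obtain rfl : e = 0 := Multiset.card_eq_zero.mp he
    exact ⟨B, hB, (veroBlock_zero_one B).symm⟩
  · rintro ⟨B, hB, rfl⟩
    exact ⟨1, 0, B, one_pos, le_rfl, Multiset.card_zero, hB, (veroBlock_zero_one B).symm⟩

theorem stmt_1 {S : Type*} (ℒ : Set (Set S)) (k k' r : ℕ) (hr : 1 ≤ r)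
    (e : Multiset S) (he : e ∈ veroPoints S k') :
    -- (1) the map `f ↦ r·f`
    (Set.MapsTo (fun f : Multiset S => r • f) (veroPoints S k) (veroPoints S (r * k)) ∧
      Set.InjOn (fun f : Multiset S => r • f) (veroPoints S k) ∧
      (∀ C ∈ veroBlocks k ℒ, (fun f : Multiset S => r • f) '' C ∈ veroBlocks (r * k) ℒ) ∧
      (∀ f ∈ veroPoints S k, ∀ g ∈ veroPoints S k,
        (BlockAdj (veroBlocks k ℒ) f g ↔ BlockAdj (veroBlocks (r * k) ℒ) (r • f) (r • g)))) ∧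
    -- (2) the map `f ↦ e + f`
    (Set.MapsTo (fun f : Multiset S => e + f) (veroPoints S k) (veroPoints S (k + k')) ∧
      Set.InjOn (fun f : Multiset S => e + f) (veroPoints S k) ∧
      (∀ C ∈ veroBlocks k ℒ, (fun f : Multiset S => e + f) '' C ∈ veroBlocks (k + k') ℒ) ∧
      (∀ f ∈ veroPoints S k, ∀ g ∈ veroPoints S k, f ≠ g →
        (BlockAdj (veroBlocks k ℒ) f g ↔ BlockAdj (veroBlocks (k + k') ℒ) (e + f) (e + g)))) ∧
    -- (3) the map `x ↦ 1·x` is an isomorphism of `(S, ℒ)` onto the first Veronese space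
    (Set.BijOn (fun x : S => ({x} : Multiset S)) Set.univ (veroPoints S 1) ∧
      ∀ C : Set (Multiset S), C ∈ veroBlocks 1 ℒ ↔
        ∃ B ∈ ℒ, (fun x : S => ({x} : Multiset S)) '' B = C) := by
  refine ⟨⟨?_, (Multiset.nsmul_injective_of_pos hr).injOn,
      fun C hC => image_nsmul_mem_veroBlocks hr hC, fun f hf g _ =>
        ⟨BlockAdj.image fun C hC => image_nsmul_mem_veroBlocks hr hC, blockAdj_of_nsmul hr hf⟩⟩,
    ⟨?_, (add_right_injective e).injOn,
      fun C hC => image_add_mem_veroBlocks he hC, fun f hf g _ hfg =>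
        ⟨BlockAdj.image fun C hC => image_add_mem_veroBlocks he hC, blockAdj_of_add hf hfg⟩⟩,
    bijOn_singleton_veroPoints_one S, fun _ => mem_veroBlocks_one⟩
  · intro f (hf : Multiset.card f = k)
    change Multiset.card (r • f) = r * k
    rw [Multiset.card_nsmul, hf]
  · intro f (hf : Multiset.card f = k)
    have he' : Multiset.card e = k' := he
    change Multiset.card (e + f) = k + k'
    rw [Multiset.card_add, hf, he', add_comm]
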